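/- In the setting of the template with P = V_1 and the construction Ω described in the context: let t ∈ 𝒯 and let h : T(t) → Ω(B) be a homomorphism. Then the mapping d : T(t) → B, defined by d(v) = f(r_vertex) where f is the unique element of h(v)_vertex, is a homomorphism Γ(T(t)) → B. -/

import Mathlib

/-!
The value `d(v)` is read off the singleton entry `h(v)_vertex`. The induction on V-terms carries
more than the claim: for every `t ∈ 𝒯_V` and homomorphism `h : T(t) → Ω(B)`, the map `d` belongs
to the entry `h(r_t)_t` (`dmap_mem_of_isHom`). For `t = vertex` this is the definition of `d`. For
`t = pr_i(edge_S(t_1, …, t_k))`, the restrictions of `h` to the `T(t_j)` are homomorphisms, so the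
induction hypothesis puts `d` into `⨉_{edge_S(t_1, …, t_k)}` of the `h`-image of the root edge, and
(A1) for that image gives the claim. Since entries of elements of `Ω(B)` consist of homomorphisms
`Γ(T(t)) → B`, the case of V-terms follows; for an S-term, the same membership in `⨉` together with
(A2) shows that `d` is a homomorphism. That `vertex ∈ 𝒯_V` as soon as `𝒯` is nonempty uses that all
arities are positive.
-/

/-- A relational signature: a type of relation symbols, each with a positive arity. -/
structure Signature : Type 1 where
  symb : Type
  ar : symb → ℕ
  ar_pos : ∀ R, 0 < ar R

/-- A relational structure over the signature `σ`. -/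
structure Struct (σ : Signature) : Type 1 where
  dom : Type
  rel : ∀ R : σ.symb, Set (Fin (σ.ar R) → dom)

variable {σ τ υ : Signature}

/-- `f` is a homomorphism of `σ`-structures from `A` to `B`. -/
def IsHom (A B : Struct σ) (f : A.dom → B.dom) : Prop :=
  ∀ R : σ.symb, ∀ x ∈ A.rel R, (fun i => f (x i)) ∈ B.rel R

/-- `A → B`: there exists a homomorphism from `A` to `B`. -/
def HomEx (A B : Struct σ) : Prop := ∃ f, IsHom A B f

/-- Terms over `σ` whose denotation is a tree rooted in a vertex: `vertex` is a V-term, and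
`pr R i ts` denotes the V-term `pr_i(edge_R(ts))`.  (An R-term `edge_R(t_1, …, t_k)` is
represented by the symbol `R` together with the tuple `ts` of V-terms.) -/
inductive VTerm (σ : Signature) : Type
  | vertex : VTerm σ
  | pr (R : σ.symb) (i : Fin (σ.ar R)) (ts : Fin (σ.ar R) → VTerm σ) : VTerm σ

/-- The domain of the tree denoted by a V-term. -/
def VTerm.domType : VTerm σ → Type
  | .vertex => PUnit
  | .pr R _ ts => (i : Fin (σ.ar R)) × (ts i).domType

/-- The root of the tree denoted by a V-term. -/
def VTerm.root : (t : VTerm σ) → t.domType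
  | .vertex => PUnit.unit
  | .pr _ i ts => ⟨i, (ts i).root⟩

/-- The domain of the tree denoted by the R-term `edge_R(ts)`: the disjoint union of the
domains of the subtrees. -/
def edgeDom (R : σ.symb) (ts : Fin (σ.ar R) → VTerm σ) : Type :=
  (i : Fin (σ.ar R)) × (ts i).domType

/-- The root edge of the tree denoted by the R-term `edge_R(ts)`. -/
def edgeRoot (R : σ.symb) (ts : Fin (σ.ar R) → VTerm σ) : Fin (σ.ar R) → edgeDom R ts :=
  fun i => ⟨i, (ts i).root⟩

/-- The relations of the tree denoted by a V-term: the relations of the disjoint subtrees,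
together with the root edge. -/
def VTerm.rel : (t : VTerm σ) → ∀ S : σ.symb, Set (Fin (σ.ar S) → t.domType)
  | .vertex, _ => ∅
  | .pr R _ ts, S =>
      {x | ∃ i : Fin (σ.ar R), ∃ y ∈ (ts i).rel S, x = fun j => ⟨i, y j⟩} ∪
      {x | ∃ h : R = S, x = fun j => edgeRoot R ts (Fin.cast (congrArg σ.ar h.symm) j)}

/-- The tree `T(t)` denoted by a V-term `t`. -/
def VTerm.tree (t : VTerm σ) : Struct σ := ⟨t.domType, t.rel⟩

/-- The tree `T(t)` denoted by the R-term `t = edge_R(ts)`. -/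
def ETerm.tree (R : σ.symb) (ts : Fin (σ.ar R) → VTerm σ) : Struct σ where
  dom := edgeDom R ts
  rel S :=
    {x | ∃ i : Fin (σ.ar R), ∃ y ∈ (ts i).rel S, x = fun j => ⟨i, y j⟩} ∪
    {x | ∃ h : R = S, x = fun j => edgeRoot R ts (Fin.cast (congrArg σ.ar h.symm) j)}

/-- The V-subterms of a V-term. -/
def VTerm.vsub : VTerm σ → Set (VTerm σ)
  | .vertex => {.vertex}
  | .pr R i ts => insert (.pr R i ts) (⋃ j, (ts j).vsub)

/-- The S-subterms of a V-term, for each `σ`-symbol `S` (an S-term `edge_S(us)` being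
represented by the tuple `us`). -/
def VTerm.esub : VTerm σ → ∀ S : σ.symb, Set (Fin (σ.ar S) → VTerm σ)
  | .vertex, _ => ∅
  | .pr R _ ts, S =>
      {us | ∃ h : R = S, us = fun j => ts (Fin.cast (congrArg σ.ar h.symm) j)} ∪
      {us | ∃ j, us ∈ (ts j).esub S}

/-- A term is either a V-term or an R-term `edge_R(ts)` for some symbol `R`. -/
def Term (σ : Signature) : Type := VTerm σ ⊕ (Σ S : σ.symb, Fin (σ.ar S) → VTerm σ)

/-- The tree denoted by a term. -/
def Term.tree : Term σ → Struct σ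
  | .inl t => t.tree
  | .inr ⟨S, ts⟩ => ETerm.tree S ts

/-- The V-subterms of a term. -/
def Term.vsub : Term σ → Set (VTerm σ)
  | .inl t => t.vsub
  | .inr ⟨_, ts⟩ => ⋃ j, (ts j).vsub

/-- The S-subterms of a term. -/
def Term.esub : Term σ → ∀ S : σ.symb, Set (Fin (σ.ar S) → VTerm σ)
  | .inl t => t.esub
  | .inr ⟨R, ts⟩ => fun S =>
      {us | ∃ h : R = S, us = fun j => ts (Fin.cast (congrArg σ.ar h.symm) j)} ∪
      {us | ∃ j, us ∈ (ts j).esub S}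

/-- The central Pultr functor for the template where `P = V₁` is a single vertex with empty
relations, `Q_R = T(tq R)` and the map `ε_{i,R}` selects the element `x R i` of `Q_R`. -/
def GammaV (tq : τ.symb → Term σ) (x : ∀ R : τ.symb, Fin (τ.ar R) → ((tq R).tree).dom)
    (A : Struct σ) : Struct τ where
  dom := A.dom
  rel R := {y | ∃ r : ((tq R).tree).dom → A.dom, IsHom ((tq R).tree) A r ∧ ∀ i, y i = r (x R i)}

/-- `𝒯_V`: all V-subterms of the chosen terms `t_R`. -/
def TVs (tq : τ.symb → Term σ) : Set (VTerm σ) := ⋃ R, (tq R).vsub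

/-- `𝒯_S`: all S-subterms of the chosen terms `t_R`. -/
def TEs (tq : τ.symb → Term σ) (S : σ.symb) : Set (Fin (σ.ar S) → VTerm σ) := ⋃ R, (tq R).esub S

/-- Domain of `Ω(B)`: tuples of sets of homomorphisms `Γ(T(t)) → B`, indexed by `t ∈ 𝒯_V`,
whose entry at `vertex` is a singleton. -/
def OmVDom (tq : τ.symb → Term σ) (x : ∀ R : τ.symb, Fin (τ.ar R) → ((tq R).tree).dom)
    (B : Struct τ) : Type :=
  {U : (t : {t : VTerm σ // t ∈ TVs tq}) → Set ((t.1.tree).dom → B.dom) //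
    (∀ t, ∀ f ∈ U t, IsHom (GammaV tq x t.1.tree) B f) ∧
    (∀ h : VTerm.vertex ∈ TVs tq, ∃! f, f ∈ U ⟨.vertex, h⟩)}

open Classical in
/-- The entry of `U` at the V-term `t` (by convention `∅` if `t ∉ 𝒯_V`). -/
noncomputable def UextV (tq : τ.symb → Term σ)
    (x : ∀ R : τ.symb, Fin (τ.ar R) → ((tq R).tree).dom)
    (B : Struct τ) (U : OmVDom tq x B) (t : VTerm σ) : Set (t.tree.dom → B.dom) :=
  if h : t ∈ TVs tq then U.1 ⟨t, h⟩ else ∅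

/-- `⨉_t(Us) = {f₁ ∪ ⋯ ∪ f_k : f_i ∈ (Us i)_{ts i}}` for the S-term `t = edge_S(ts)`:
maps on the disjoint union all of whose components lie in the prescribed sets. -/
def timesV (tq : τ.symb → Term σ) (x : ∀ R : τ.symb, Fin (τ.ar R) → ((tq R).tree).dom)
    (B : Struct τ) (S : σ.symb) (ts : Fin (σ.ar S) → VTerm σ)
    (Us : Fin (σ.ar S) → OmVDom tq x B) : Set (edgeDom S ts → B.dom) :=
  {g | ∀ j, (fun z => g ⟨j, z⟩) ∈ UextV tq x B (Us j) (ts j)}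

/-- The right adjoint `Ω` for the template with `P = V₁`. -/
noncomputable def OmegaV (tq : τ.symb → Term σ)
    (x : ∀ R : τ.symb, Fin (τ.ar R) → ((tq R).tree).dom) (B : Struct τ) : Struct σ where
  dom := OmVDom tq x B
  rel S := {Us |
    (∀ ts ∈ TEs tq S, ∀ i : Fin (σ.ar S), VTerm.pr S i ts ∈ TVs tq →
        ∀ g ∈ timesV tq x B S ts Us, g ∈ UextV tq x B (Us i) (.pr S i ts)) ∧
    (∀ ts ∈ TEs tq S, ∀ g ∈ timesV tq x B S ts Us,
        IsHom (GammaV tq x (ETerm.tree S ts)) B g)}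

/-! ### Closure of `𝒯` under subterms -/

theorem VTerm.self_mem_vsub (t : VTerm σ) : t ∈ t.vsub := by
  cases t <;> simp [VTerm.vsub]

theorem VTerm.vertex_mem_vsub (t : VTerm σ) : VTerm.vertex ∈ t.vsub := by
  induction t with
  | vertex => simp [VTerm.vsub]
  | pr R i ts ih => exact Or.inr (Set.mem_iUnion.2 ⟨i, ih i⟩)

theorem VTerm.mem_esub_of_pr_mem_vsub {S : σ.symb} {i : Fin (σ.ar S)}
    {us : Fin (σ.ar S) → VTerm σ} (t : VTerm σ) (h : VTerm.pr S i us ∈ t.vsub) :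
    us ∈ t.esub S := by
  induction t with
  | vertex => simp [VTerm.vsub] at h
  | pr R k ts ih =>
    rcases h with h | h
    · cases h
      exact Or.inl ⟨rfl, rfl⟩
    · obtain ⟨j, hj⟩ := Set.mem_iUnion.1 h
      exact Or.inr ⟨j, ih j hj⟩

theorem VTerm.mem_vsub_of_mem_esub {S : σ.symb} {us : Fin (σ.ar S) → VTerm σ} (t : VTerm σ)
    (h : us ∈ t.esub S) (j : Fin (σ.ar S)) : us j ∈ t.vsub := by
  induction t with
  | vertex => exact h.elim
  | pr R k ts ih =>
    rcases h with ⟨h, rfl⟩ | ⟨l, hl⟩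
    · exact Or.inr (Set.mem_iUnion.2 ⟨_, VTerm.self_mem_vsub _⟩)
    · exact Or.inr (Set.mem_iUnion.2 ⟨l, ih l hl⟩)

theorem mem_TEs_of_pr_mem_TVs {tq : τ.symb → Term σ} {S : σ.symb} {i : Fin (σ.ar S)}
    {us : Fin (σ.ar S) → VTerm σ} (h : VTerm.pr S i us ∈ TVs tq) : us ∈ TEs tq S := by
  obtain ⟨R, hR⟩ := Set.mem_iUnion.1 h
  refine Set.mem_iUnion.2 ⟨R, ?_⟩
  generalize tq R = q at hR
  rcases q with t | ⟨S', ts⟩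
  · exact VTerm.mem_esub_of_pr_mem_vsub t hR
  · obtain ⟨j, hj⟩ := Set.mem_iUnion.1 hR
    exact Or.inr ⟨j, VTerm.mem_esub_of_pr_mem_vsub _ hj⟩

theorem mem_TVs_of_mem_TEs {tq : τ.symb → Term σ} {S : σ.symb}
    {us : Fin (σ.ar S) → VTerm σ} (h : us ∈ TEs tq S) (j : Fin (σ.ar S)) : us j ∈ TVs tq := by
  obtain ⟨R, hR⟩ := Set.mem_iUnion.1 h
  refine Set.mem_iUnion.2 ⟨R, ?_⟩
  generalize tq R = q at hR
  rcases q with t | ⟨S', ts⟩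
  · exact VTerm.mem_vsub_of_mem_esub t hR j
  · rcases hR with ⟨h, rfl⟩ | ⟨l, hl⟩
    · exact Set.mem_iUnion.2 ⟨_, VTerm.self_mem_vsub _⟩
    · exact Set.mem_iUnion.2 ⟨l, VTerm.mem_vsub_of_mem_esub _ hl j⟩

theorem vertex_mem_TVs {tq : τ.symb → Term σ} {t : VTerm σ} (h : t ∈ TVs tq) :
    VTerm.vertex ∈ TVs tq := by
  obtain ⟨R, hR⟩ := Set.mem_iUnion.1 h
  refine Set.mem_iUnion.2 ⟨R, ?_⟩
  generalize tq R = q at hR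
  rcases q with t | ⟨S', ts⟩
  · exact VTerm.vertex_mem_vsub t
  · exact Set.mem_iUnion.2 ⟨⟨0, σ.ar_pos S'⟩, VTerm.vertex_mem_vsub _⟩

/-! ### The map `d` -/

/-- The element of `B` encoded by `U ∈ Ω(B)`: the value at the unique vertex of `T(vertex)` of the
unique element of `U_vertex`. The map `d` of the theorem is `v ↦ dmap hv (h v)`. -/
noncomputable def dmap {tq : τ.symb → Term σ} {x : ∀ R : τ.symb, Fin (τ.ar R) → ((tq R).tree).dom}
    {B : Struct τ} (hv : VTerm.vertex ∈ TVs tq) (U : OmVDom tq x B) : B.dom :=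
  (U.2.2 hv).choose PUnit.unit

theorem dmap_eq {tq : τ.symb → Term σ} {x : ∀ R : τ.symb, Fin (τ.ar R) → ((tq R).tree).dom}
    {B : Struct τ} (hv : VTerm.vertex ∈ TVs tq) (U : OmVDom tq x B)
    (f : ((VTerm.vertex : VTerm σ).tree).dom → B.dom) (hf : f ∈ U.1 ⟨.vertex, hv⟩) :
    dmap hv U = f PUnit.unit :=
  congrFun ((U.2.2 hv).choose_spec.2 f hf).symm PUnit.unit

theorem UextV_of_mem {tq : τ.symb → Term σ}
    {x : ∀ R : τ.symb, Fin (τ.ar R) → ((tq R).tree).dom} {B : Struct τ} (U : OmVDom tq x B)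
    {t : VTerm σ} (ht : t ∈ TVs tq) : UextV tq x B U t = U.1 ⟨t, ht⟩ :=
  dif_pos ht

theorem IsHom.comp_edge_inj {S : σ.symb} {ts : Fin (σ.ar S) → VTerm σ} {A : Struct σ}
    {h : (ETerm.tree S ts).dom → A.dom} (hh : IsHom (ETerm.tree S ts) A h) (j : Fin (σ.ar S)) :
    IsHom (ts j).tree A (fun z => h ⟨j, z⟩) :=
  fun R y hy => hh R (fun i => ⟨j, y i⟩) (Or.inl ⟨j, y, hy, rfl⟩)

theorem IsHom.edgeRoot_mem {S : σ.symb} {ts : Fin (σ.ar S) → VTerm σ} {A : Struct σ}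
    {h : (ETerm.tree S ts).dom → A.dom} (hh : IsHom (ETerm.tree S ts) A h) :
    (fun i => h (edgeRoot S ts i)) ∈ A.rel S :=
  hh S (edgeRoot S ts) (Or.inr ⟨rfl, rfl⟩)

/-- The strengthened induction: `d` lies in the entry of `h(r_t)` at `t`. -/
theorem dmap_mem_of_isHom {tq : τ.symb → Term σ}
    {x : ∀ R : τ.symb, Fin (τ.ar R) → ((tq R).tree).dom} {B : Struct τ}
    (hv : VTerm.vertex ∈ TVs tq) (t : VTerm σ) (ht : t ∈ TVs tq)
    (h : (t.tree).dom → OmVDom tq x B) (hh : IsHom t.tree (OmegaV tq x B) h) :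
    (fun v => dmap hv (h v)) ∈ UextV tq x B (h t.root) t := by
  induction t with
  | vertex =>
    refine (UextV_of_mem _ ht).symm ▸ ?_
    exact ((h PUnit.unit).2.2 hv).choose_spec.1
  | pr S i ts ih =>
    -- `T(pr_i(e))` and `T(e)` are the same structure.
    have hE : IsHom (ETerm.tree S ts) (OmegaV tq x B) h := hh
    have hts := mem_TEs_of_pr_mem_TVs ht
    exact hE.edgeRoot_mem.1 ts hts i ht _
      fun j => ih j (mem_TVs_of_mem_TEs hts j) _ (hE.comp_edge_inj j)

/-- for `t ∈ 𝒯` and a homomorphism `h : T(t) → Ω(B)`, the map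
`d : T(t) → B` sending `v` to `f(r_vertex)`, where `f` is the unique element of
`h(v)_vertex`, is a homomorphism `Γ(T(t)) → B`.  (Stated for V-terms and for R-terms in `𝒯`.) -/
theorem omegaV_tree_lemma {σ τ : Signature} (tq : τ.symb → Term σ)
    (x : ∀ R : τ.symb, Fin (τ.ar R) → ((tq R).tree).dom) (B : Struct τ) :
    (∀ t : VTerm σ, t ∈ TVs tq →
      ∀ h : (t.tree).dom → (OmegaV tq x B).dom, IsHom t.tree (OmegaV tq x B) h →
        ∃ d : (t.tree).dom → B.dom,
          (∀ (v : (t.tree).dom) (hv : VTerm.vertex ∈ TVs tq)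
              (f : ((VTerm.vertex : VTerm σ).tree).dom → B.dom),
              f ∈ (h v).1 ⟨.vertex, hv⟩ → d v = f PUnit.unit) ∧
          IsHom (GammaV tq x t.tree) B d) ∧
    (∀ (S : σ.symb) (ts : Fin (σ.ar S) → VTerm σ), ts ∈ TEs tq S →
      ∀ h : (ETerm.tree S ts).dom → (OmegaV tq x B).dom,
        IsHom (ETerm.tree S ts) (OmegaV tq x B) h →
        ∃ d : (ETerm.tree S ts).dom → B.dom,
          (∀ (v : (ETerm.tree S ts).dom) (hv : VTerm.vertex ∈ TVs tq)
              (f : ((VTerm.vertex : VTerm σ).tree).dom → B.dom),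
              f ∈ (h v).1 ⟨.vertex, hv⟩ → d v = f PUnit.unit) ∧
          IsHom (GammaV tq x (ETerm.tree S ts)) B d) := by
  refine ⟨fun t ht h hh => ?_, fun S ts hts h hh => ?_⟩
  · have hv := vertex_mem_TVs ht
    refine ⟨fun v => dmap hv (h v), fun v _ f hf => dmap_eq hv (h v) f hf, ?_⟩
    exact (h t.root).2.1 ⟨t, ht⟩ _
      ((UextV_of_mem (h t.root) ht).subset (dmap_mem_of_isHom hv t ht h hh))
  · have hv := vertex_mem_TVs (mem_TVs_of_mem_TEs hts ⟨0, σ.ar_pos S⟩)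
    refine ⟨fun v => dmap hv (h v), fun v _ f hf => dmap_eq hv (h v) f hf, ?_⟩
    exact hh.edgeRoot_mem.2 ts hts _ fun j =>
      dmap_mem_of_isHom hv (ts j) (mem_TVs_of_mem_TEs hts j) _ (hh.comp_edge_inj j)
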